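/- Fix a real number $\hbar>0$ and an integer $N\ge 2$. A Gelfand–Zetlin array is a family $\gamma=(\gamma_{nj})_{1\le j\le n\le N}$ of complex numbers; $e_{nj}$ denotes the array equal to $1$ in position $(n,j)$ and $0$ elsewhere. For functions $f$ of such arrays and $1\le n\le N-1$ put $$(E_{n,n+1}f)(\gamma)=-\frac1{i\hbar}\sum_{j=1}^n\frac{\prod_{r=1}^{n+1}(\gamma_{nj}-\gamma_{n+1,r}-\frac{i\hbar}2)}{\prod_{s\le n,\,s\ne j}(\gamma_{nj}-\gamma_{ns})}\,f(\gamma-i\hbar e_{nj}),$$ $$(E_{n+1,n}f)(\gamma)=\frac1{i\hbar}\sum_{j=1}^n\frac{\prod_{r=1}^{n-1}(\gamma_{nj}-\gamma_{n-1,r}+\frac{i\hbar}2)}{\prod_{s\le n,\,s\ne j}(\gamma_{nj}-\gamma_{ns})}\,f(\gamma+i\hbar e_{nj}).$$ With $(2\hbar)^z:=\exp(z\log(2\hbar))$, where $\log$ is the real logarithm, define $$\phi_n(\gamma_n,\gamma_{n+1})=\prod_{k=1}^n\prod_{m=1}^{n+1}(2\hbar)^{\frac{\gamma_{nk}-\gamma_{n+1,m}}{2i\hbar}+\frac14}\,\Gamma\Big(\frac{\gamma_{nk}-\gamma_{n+1,m}}{2i\hbar}+\frac14\Big),$$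 $$v_N(\gamma)=\exp\Big(-\frac{\pi}{2\hbar}\sum_{n=1}^{N-1}(n-1)\sum_{j=1}^n\gamma_{nj}\Big)\prod_{n=1}^{N-1}\phi_n(\gamma_n,\gamma_{n+1}).$$ Let $\gamma$ be a Gelfand–Zetlin array that is non-resonant, i.e. $(\gamma_{nj}-\gamma_{ns})/(i\hbar)\notin\mathbb Z$ for all $1\le n\le N-1$ and $1\le j<s\le n$, and such that $(\gamma_{nk}-\gamma_{n+1,m})/(i\hbar)+\frac12\notin\mathbb Z$ for all $1\le n\le N-1$, $1\le k\le n$, $1\le m\le n+1$. Then for every $1\le n\le N-1$ $$\big((E_{n,n+1}-E_{n+1,n})v_N\big)(\gamma)=0;$$ explicitly, $$\sum_{j=1}^n\frac{\prod_{r=1}^{n+1}(\gamma_{nj}-\gamma_{n+1,r}-\frac{i\hbar}2)\,v_N(\gamma-i\hbar e_{nj})+\prod_{r=1}^{n-1}(\gamma_{nj}-\gamma_{n-1,r}+\frac{i\hbar}2)\,v_N(\gamma+i\hbar e_{nj})}{\prod_{s\le n,\,s\ne j}(\gamma_{nj}-\gamma_{ns})}=0.$$ -/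

import Mathlib

noncomputable section

/-- A Gelfand–Zetlin array: complex numbers `γ n j`. Only the entries with `1 ≤ j ≤ n ≤ N` are
ever used; all other entries are irrelevant. -/
abbrev GZ := ℕ → ℕ → ℂ

/-- The array `γ + c • e_{nj}`: the single entry `γ n j` is shifted by `c`. -/
def gzShift (c : ℂ) (n j : ℕ) (γ : GZ) : GZ :=
  fun a b => if a = n ∧ b = j then γ a b + c else γ a b

/-- The Gelfand–Zetlin operator `E_{n,n+1}`. -/
def Eraise (ℏ : ℝ) (n : ℕ) (f : GZ → ℂ) : GZ → ℂ := fun γ =>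
  -(1 / (Complex.I * ℏ)) * ∑ j ∈ Finset.Icc 1 n,
    ((∏ r ∈ Finset.Icc 1 (n + 1), (γ n j - γ (n + 1) r - Complex.I * ℏ / 2)) /
      ∏ s ∈ (Finset.Icc 1 n).erase j, (γ n j - γ n s)) * f (gzShift (-(Complex.I * ℏ)) n j γ)

/-- The Gelfand–Zetlin operator `E_{n+1,n}`. -/
def Elower (ℏ : ℝ) (n : ℕ) (f : GZ → ℂ) : GZ → ℂ := fun γ =>
  (1 / (Complex.I * ℏ)) * ∑ j ∈ Finset.Icc 1 n,
    ((∏ r ∈ Finset.Icc 1 (n - 1), (γ n j - γ (n - 1) r + Complex.I * ℏ / 2)) /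
      ∏ s ∈ (Finset.Icc 1 n).erase j, (γ n j - γ n s)) * f (gzShift (Complex.I * ℏ) n j γ)

/-- Non-resonance: below the top row, no two entries of the same row differ by an integer
multiple of `iℏ`. -/
def NonResonant (ℏ : ℝ) (N : ℕ) (γ : GZ) : Prop :=
  ∀ n ∈ Finset.Icc 1 (N - 1), ∀ j s : ℕ, 1 ≤ j → j < s → s ≤ n →
    ∀ m : ℤ, (γ n j - γ n s) / (Complex.I * ℏ) ≠ (m : ℂ)

/-- The factor `φ_n(γ_n, γ_{n+1})`. For `ℏ > 0` the complex power is
`(2ℏ)^z = exp (z * log (2ℏ))` with the real logarithm. -/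
def phiS (ℏ : ℝ) (n : ℕ) (γ : GZ) : ℂ :=
  ∏ k ∈ Finset.Icc 1 n, ∏ m ∈ Finset.Icc 1 (n + 1),
    (2 * (ℏ : ℂ)) ^ ((γ n k - γ (n + 1) m) / (2 * Complex.I * ℏ) + 1 / 4) *
      Complex.Gamma ((γ n k - γ (n + 1) m) / (2 * Complex.I * ℏ) + 1 / 4)

/-- The Sutherland vector `v_N`. -/
def vSuth (ℏ : ℝ) (N : ℕ) (γ : GZ) : ℂ :=
  Complex.exp (-((Real.pi : ℂ) / (2 * (ℏ : ℂ))) *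
      ∑ n ∈ Finset.Icc 1 (N - 1), ((n : ℂ) - 1) * ∑ j ∈ Finset.Icc 1 n, γ n j) *
    ∏ n ∈ Finset.Icc 1 (N - 1), phiS ℏ n γ

end

/-!
The sum vanishes term by term. By `Γ(z + 1) = z Γ(z)`, the factor `F(x)` of `φ_n` at a difference
`x = γ_{nk} - γ_{n+1,m}` satisfies `(x - iℏ/2) F(x - iℏ) = i F(x + iℏ)`. Hence the numerator of
`E_{n,n+1}` exchanges the two shifts of `γ_{nj}` in `φ_n` at the cost of `i^(n+1)`, and that of
`E_{n+1,n}` exchanges them in `φ_{n-1}` at the cost of `(-i)^(n-1)`. The exponential prefactor of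
`v_N` contributes `i^(n-1)` to the first term and `(-i)^(n-1)` to the second, so the total phases
`i^(2n) = (-1)^n` and `(-i)^(2n-2) = (-1)^(n-1)` are opposite.
-/

section

open Complex Finset

theorem mul_cpow_mul_Gamma {a z : ℂ} (ha : a ≠ 0) (hz : z ≠ 0) :
    a * z * (a ^ z * Gamma z) = a ^ (z + 1) * Gamma (z + 1) := by
  rw [cpow_add _ _ ha, cpow_one, Gamma_add_one z hz]
  ring

/-- The factor of `φ_n` contributed by a difference `x = γ_{nk} - γ_{n+1,m}`. -/
noncomputable def gammaFactor (ℏ : ℝ) (x : ℂ) : ℂ :=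
  (2 * (ℏ : ℂ)) ^ (x / (2 * I * ℏ) + 1 / 4) * Gamma (x / (2 * I * ℏ) + 1 / 4)

variable {ℏ : ℝ}

theorem sub_mul_gammaFactor_sub (hℏ : ℏ ≠ 0) {x : ℂ} (hx : x ≠ I * ℏ / 2) :
    (x - I * ℏ / 2) * gammaFactor ℏ (x - I * ℏ) = I * gammaFactor ℏ (x + I * ℏ) := by
  have hℏ' : (ℏ : ℂ) ≠ 0 := ofReal_ne_zero.mpr hℏ
  obtain ⟨z, rfl⟩ : ∃ z, x = I * (2 * ℏ * z) + I * ℏ / 2 :=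
    ⟨(x - I * ℏ / 2) / (2 * I * ℏ), by field_simp; ring⟩
  have hz : z ≠ 0 := by
    rintro rfl
    simp at hx
  have hdown : (I * (2 * ℏ * z) + I * ℏ / 2 - I * ℏ) / (2 * I * ℏ) + 1 / 4 = z := by
    field_simp
    ring
  have hup : (I * (2 * ℏ * z) + I * ℏ / 2 + I * ℏ) / (2 * I * ℏ) + 1 / 4 = z + 1 := by
    field_simp
    ring
  rw [gammaFactor, gammaFactor, hdown, hup, add_sub_cancel_right, mul_assoc,
    mul_cpow_mul_Gamma (mul_ne_zero two_ne_zero hℏ') hz]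

theorem phiS_eq_prod_gammaFactor (ℏ : ℝ) (n : ℕ) (γ : GZ) :
    phiS ℏ n γ = ∏ k ∈ Icc 1 n, ∏ m ∈ Icc 1 (n + 1), gammaFactor ℏ (γ n k - γ (n + 1) m) :=
  rfl

theorem phiS_zero (ℏ : ℝ) (γ : GZ) : phiS ℏ 0 γ = 1 := by
  simp [phiS]

theorem gzShift_apply_self (c : ℂ) (n j : ℕ) (γ : GZ) : gzShift c n j γ n j = γ n j + c := by
  simp [gzShift]

theorem gzShift_apply_of_ne (c : ℂ) (n : ℕ) {j k : ℕ} (γ : GZ) (h : k ≠ j) :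
    gzShift c n j γ n k = γ n k := by
  simp [gzShift, h]

theorem gzShift_row_of_ne (c : ℂ) {n l : ℕ} (j : ℕ) (γ : GZ) (h : l ≠ n) :
    gzShift c n j γ l = γ l := by
  ext k
  simp [gzShift, h]

theorem phiS_gzShift_of_ne (ℏ : ℝ) (c : ℂ) {n l : ℕ} (j : ℕ) (γ : GZ) (h : l ≠ n)
    (h' : l + 1 ≠ n) : phiS ℏ l (gzShift c n j γ) = phiS ℏ l γ := by
  simp only [phiS, gzShift_row_of_ne c j γ h, gzShift_row_of_ne c j γ h']

theorem phiS_gzShift_lower_row (ℏ : ℝ) (c : ℂ) {n j : ℕ} (hj : j ∈ Icc 1 n) (γ : GZ) :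
    phiS ℏ n (gzShift c n j γ) =
      (∏ m ∈ Icc 1 (n + 1), gammaFactor ℏ (γ n j + c - γ (n + 1) m)) *
        ∏ k ∈ (Icc 1 n).erase j, ∏ m ∈ Icc 1 (n + 1), gammaFactor ℏ (γ n k - γ (n + 1) m) := by
  rw [phiS_eq_prod_gammaFactor, ← mul_prod_erase _ _ hj, gzShift_apply_self,
    gzShift_row_of_ne c j γ n.succ_ne_self]
  congr 1
  refine prod_congr rfl fun k hk => ?_
  rw [gzShift_apply_of_ne c n γ (ne_of_mem_erase hk)]

theorem phiS_gzShift_upper_row (ℏ : ℝ) (c : ℂ) {n j : ℕ} (hj : j ∈ Icc 1 (n + 1)) (γ : GZ) :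
    phiS ℏ n (gzShift c (n + 1) j γ) =
      (∏ k ∈ Icc 1 n, gammaFactor ℏ (γ n k - (γ (n + 1) j + c))) *
        ∏ k ∈ Icc 1 n, ∏ m ∈ (Icc 1 (n + 1)).erase j, gammaFactor ℏ (γ n k - γ (n + 1) m) := by
  rw [phiS_eq_prod_gammaFactor, ← prod_mul_distrib, gzShift_row_of_ne c j γ n.succ_ne_self.symm]
  refine prod_congr rfl fun k _ => ?_
  rw [← mul_prod_erase _ _ hj, gzShift_apply_self]
  congr 1
  refine prod_congr rfl fun m hm => ?_
  rw [gzShift_apply_of_ne c (n + 1) γ (ne_of_mem_erase hm)]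

theorem prod_mul_phiS_gzShift_lower_row (hℏ : ℏ ≠ 0) {n j : ℕ} (hj : j ∈ Icc 1 n) {γ : GZ}
    (h : ∀ m ∈ Icc 1 (n + 1), γ n j - γ (n + 1) m ≠ I * ℏ / 2) :
    (∏ m ∈ Icc 1 (n + 1), (γ n j - γ (n + 1) m - I * ℏ / 2)) *
        phiS ℏ n (gzShift (-(I * ℏ)) n j γ) =
      I ^ (n + 1) * phiS ℏ n (gzShift (I * ℏ) n j γ) := by
  have hfactors : (∏ m ∈ Icc 1 (n + 1), (γ n j - γ (n + 1) m - I * ℏ / 2)) *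
      ∏ m ∈ Icc 1 (n + 1), gammaFactor ℏ (γ n j + -(I * ℏ) - γ (n + 1) m) =
        I ^ (n + 1) * ∏ m ∈ Icc 1 (n + 1), gammaFactor ℏ (γ n j + I * ℏ - γ (n + 1) m) := by
    have hcard : I ^ (n + 1) = ∏ _m ∈ Icc 1 (n + 1), I := by simp
    rw [hcard, ← prod_mul_distrib, ← prod_mul_distrib]
    refine prod_congr rfl fun m hm => ?_
    convert sub_mul_gammaFactor_sub hℏ (h m hm) using 3 <;> ring
  rw [phiS_gzShift_lower_row ℏ _ hj, phiS_gzShift_lower_row ℏ _ hj, ← mul_assoc, hfactors,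
    mul_assoc]

theorem prod_mul_phiS_gzShift_upper_row (hℏ : ℏ ≠ 0) {n j : ℕ} (hj : j ∈ Icc 1 (n + 1)) {γ : GZ}
    (h : ∀ k ∈ Icc 1 n, γ n k - γ (n + 1) j ≠ I * ℏ / 2) :
    (∏ k ∈ Icc 1 n, (γ (n + 1) j - γ n k + I * ℏ / 2)) *
        phiS ℏ n (gzShift (I * ℏ) (n + 1) j γ) =
      (-I) ^ n * phiS ℏ n (gzShift (-(I * ℏ)) (n + 1) j γ) := by
  have hfactors : (∏ k ∈ Icc 1 n, (γ (n + 1) j - γ n k + I * ℏ / 2)) *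
      ∏ k ∈ Icc 1 n, gammaFactor ℏ (γ n k - (γ (n + 1) j + I * ℏ)) =
        (-I) ^ n * ∏ k ∈ Icc 1 n, gammaFactor ℏ (γ n k - (γ (n + 1) j + -(I * ℏ))) := by
    have hcard : (-I) ^ n = ∏ _k ∈ Icc 1 n, -I := by simp
    rw [hcard, ← prod_mul_distrib, ← prod_mul_distrib]
    refine prod_congr rfl fun k hk => ?_
    have hfactor := sub_mul_gammaFactor_sub hℏ (h k hk)
    rw [sub_sub _ _ (I * (ℏ : ℂ)), sub_add, sub_eq_add_neg (γ (n + 1) j)] at hfactor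
    linear_combination -hfactor
  rw [phiS_gzShift_upper_row ℏ _ hj, phiS_gzShift_upper_row ℏ _ hj, ← mul_assoc, hfactors,
    mul_assoc]

theorem sum_mul_sum_gzShift (c : ℂ) {n j : ℕ} {s : Finset ℕ} (hn : n ∈ s) (hj : j ∈ Icc 1 n)
    (w : ℕ → ℂ) (γ : GZ) :
    ∑ l ∈ s, w l * ∑ k ∈ Icc 1 l, gzShift c n j γ l k =
      ∑ l ∈ s, w l * ∑ k ∈ Icc 1 l, γ l k + w n * c := by
  have hrow : ∑ k ∈ Icc 1 n, gzShift c n j γ n k = ∑ k ∈ Icc 1 n, γ n k + c := by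
    rw [← add_sum_erase _ _ hj, ← add_sum_erase _ (γ n) hj, gzShift_apply_self, add_right_comm]
    congr 2
    exact sum_congr rfl fun k hk => gzShift_apply_of_ne c n γ (ne_of_mem_erase hk)
  have hrest : ∑ l ∈ s.erase n, w l * ∑ k ∈ Icc 1 l, gzShift c n j γ l k =
      ∑ l ∈ s.erase n, w l * ∑ k ∈ Icc 1 l, γ l k :=
    sum_congr rfl fun l hl => by rw [gzShift_row_of_ne c j γ (ne_of_mem_erase hl)]
  rw [← add_sum_erase _ _ hn, ← add_sum_erase s (fun l => w l * ∑ k ∈ Icc 1 l, γ l k) hn, hrow,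
    hrest]
  ring

theorem prod_phiS_eq_mul_prod_sdiff (ℏ : ℝ) {N n : ℕ} (hn : n + 1 < N) (γ : GZ) :
    ∏ l ∈ Icc 1 (N - 1), phiS ℏ l γ =
      phiS ℏ n γ * phiS ℏ (n + 1) γ * ∏ l ∈ range N \ {n, n + 1}, phiS ℏ l γ := by
  have hIcc : Icc 1 (N - 1) = (range N).erase 0 := by
    ext l
    simp only [mem_Icc, mem_erase, mem_range]
    omega
  have hsub : {n, n + 1} ⊆ range N := by
    simp only [insert_subset_iff, singleton_subset_iff, mem_range]
    omega
  rw [hIcc, prod_erase (range N) (f := (phiS ℏ · γ)) (phiS_zero ℏ γ), ← prod_sdiff hsub,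
    prod_pair n.succ_ne_self.symm, mul_comm]

theorem exists_vSuth_gzShift_eq (ℏ : ℝ) {N n j : ℕ} (hn : n + 1 < N) (hj : j ∈ Icc 1 (n + 1))
    (γ : GZ) :
    ∃ R : ℂ, ∀ c : ℂ, vSuth ℏ N (gzShift c (n + 1) j γ) =
      exp (-(Real.pi / (2 * ℏ)) * (n * c)) * phiS ℏ n (gzShift c (n + 1) j γ) *
        phiS ℏ (n + 1) (gzShift c (n + 1) j γ) * R := by
  refine ⟨exp (-(Real.pi / (2 * ℏ)) *
    ∑ l ∈ Icc 1 (N - 1), ((l : ℂ) - 1) * ∑ k ∈ Icc 1 l, γ l k) *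
      ∏ l ∈ range N \ {n, n + 1}, phiS ℏ l γ, fun c => ?_⟩
  have hmem : n + 1 ∈ Icc 1 (N - 1) := mem_Icc.mpr (by omega)
  have hrest : ∏ l ∈ range N \ {n, n + 1}, phiS ℏ l (gzShift c (n + 1) j γ) =
      ∏ l ∈ range N \ {n, n + 1}, phiS ℏ l γ := by
    refine prod_congr rfl fun l hl => ?_
    simp only [mem_sdiff, mem_insert, mem_singleton, not_or] at hl
    exact phiS_gzShift_of_ne ℏ c j γ hl.2.2 (by omega)
  rw [vSuth, sum_mul_sum_gzShift c hmem hj, prod_phiS_eq_mul_prod_sdiff ℏ hn, hrest, mul_add,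
    exp_add]
  push_cast
  ring_nf

theorem exp_neg_pi_div_mul_I_mul (hℏ : ℏ ≠ 0) (n : ℕ) :
    exp (-(Real.pi / (2 * ℏ)) * (n * (I * ℏ))) = (-I) ^ n := by
  have hℏ' : (ℏ : ℂ) ≠ 0 := ofReal_ne_zero.mpr hℏ
  rw [← exp_neg_pi_div_two_mul_I, ← exp_nat_mul]
  congr 1
  field_simp

theorem exp_neg_pi_div_mul_neg_I_mul (hℏ : ℏ ≠ 0) (n : ℕ) :
    exp (-(Real.pi / (2 * ℏ)) * (n * -(I * ℏ))) = I ^ n := by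
  rw [mul_neg, mul_neg, exp_neg, exp_neg_pi_div_mul_I_mul hℏ, ← inv_pow, inv_neg, inv_I, neg_neg]

theorem prod_mul_vSuth_gzShift_add_eq_zero (hℏ : ℏ ≠ 0) {N n j : ℕ} (hn : n + 1 < N)
    (hj : j ∈ Icc 1 (n + 1)) {γ : GZ}
    (hupper : ∀ m ∈ Icc 1 (n + 2), γ (n + 1) j - γ (n + 2) m ≠ I * ℏ / 2)
    (hlower : ∀ k ∈ Icc 1 n, γ n k - γ (n + 1) j ≠ I * ℏ / 2) :
    (∏ r ∈ Icc 1 (n + 2), (γ (n + 1) j - γ (n + 2) r - I * ℏ / 2)) *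
        vSuth ℏ N (gzShift (-(I * ℏ)) (n + 1) j γ) +
      (∏ r ∈ Icc 1 n, (γ (n + 1) j - γ n r + I * ℏ / 2)) *
        vSuth ℏ N (gzShift (I * ℏ) (n + 1) j γ) = 0 := by
  obtain ⟨R, hR⟩ := exists_vSuth_gzShift_eq ℏ hn hj γ
  have hraise := prod_mul_phiS_gzShift_lower_row hℏ hj hupper
  have hlow := prod_mul_phiS_gzShift_upper_row hℏ hj hlower
  have hphase : I ^ n * I ^ (n + 2) + (-I) ^ n * (-I) ^ n = 0 := by
    rw [pow_add, I_sq, ← mul_pow, neg_mul_neg, mul_pow]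
    ring
  rw [hR, hR, exp_neg_pi_div_mul_I_mul hℏ, exp_neg_pi_div_mul_neg_I_mul hℏ]
  linear_combination
    I ^ n * phiS ℏ n (gzShift (-(I * ℏ)) (n + 1) j γ) * R * hraise +
    (-I) ^ n * phiS ℏ (n + 1) (gzShift (I * ℏ) (n + 1) j γ) * R * hlow +
    phiS ℏ n (gzShift (-(I * ℏ)) (n + 1) j γ) *
      phiS ℏ (n + 1) (gzShift (I * ℏ) (n + 1) j γ) * R * hphase

theorem Eraise_sub_Elower (ℏ : ℝ) (n : ℕ) (f : GZ → ℂ) (γ : GZ) :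
    Eraise ℏ n f γ - Elower ℏ n f γ = -(1 / (I * ℏ)) * ∑ j ∈ Icc 1 n,
      ((∏ r ∈ Icc 1 (n + 1), (γ n j - γ (n + 1) r - I * ℏ / 2)) * f (gzShift (-(I * ℏ)) n j γ) +
        (∏ r ∈ Icc 1 (n - 1), (γ n j - γ (n - 1) r + I * ℏ / 2)) * f (gzShift (I * ℏ) n j γ)) /
      ∏ s ∈ (Icc 1 n).erase j, (γ n j - γ n s) := by
  simp only [Eraise, Elower, div_mul_eq_mul_div, add_div, sum_add_distrib]
  ring

theorem ne_I_mul_div_two_of_div_add_half_ne_one (hℏ : ℏ ≠ 0) {x : ℂ}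
    (h : x / (I * ℏ) + 1 / 2 ≠ 1) : x ≠ I * ℏ / 2 := by
  rintro rfl
  have hIℏ : I * (ℏ : ℂ) ≠ 0 := mul_ne_zero I_ne_zero (ofReal_ne_zero.mpr hℏ)
  rw [div_right_comm, div_self hIℏ, add_halves] at h
  exact h rfl

theorem NonResonant.injOn {N : ℕ} {γ : GZ} (hγ : NonResonant ℏ N γ) {n : ℕ}
    (hn : n ∈ Icc 1 (N - 1)) : Set.InjOn (γ n) (Icc 1 n) := by
  have hlt : ∀ j ∈ Icc 1 n, ∀ s ∈ Icc 1 n, j < s → γ n j ≠ γ n s := fun j hj s hs hjs heq =>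
    hγ n hn j s (mem_Icc.mp hj).1 hjs (mem_Icc.mp hs).2 0 (by simp [heq])
  intro j hj s hs heq
  rcases lt_trichotomy j s with hjs | hjs | hjs
  · exact absurd heq (hlt j hj s hs hjs)
  · exact hjs
  · exact absurd heq.symm (hlt s hs j hj hjs)

-- The poles of the Gamma factors of `v_N` at `γ` and at its shifts occur at integers `z ≤ 1`.
theorem sutherland_vector_vN_general (hℏ : ℏ ≠ 0) {N : ℕ} {γ : GZ}
    (hγ : ∀ n ∈ Icc 1 (N - 1), Set.InjOn (γ n) (Icc 1 n))
    (hγ' : ∀ n ∈ Icc 1 (N - 1), ∀ k ∈ Icc 1 n, ∀ m ∈ Icc 1 (n + 1),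
      ∀ z : ℤ, z ≤ 1 → (γ n k - γ (n + 1) m) / (I * ℏ) + 1 / 2 ≠ (z : ℂ))
    {n : ℕ} (hn : 1 ≤ n) (hnN : n ≤ N - 1) :
    Eraise ℏ n (vSuth ℏ N) γ - Elower ℏ n (vSuth ℏ N) γ = 0 ∧
    ∑ j ∈ Icc 1 n,
      ((∏ r ∈ Icc 1 (n + 1), (γ n j - γ (n + 1) r - I * ℏ / 2)) *
          vSuth ℏ N (gzShift (-(I * ℏ)) n j γ) +
        (∏ r ∈ Icc 1 (n - 1), (γ n j - γ (n - 1) r + I * ℏ / 2)) *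
          vSuth ℏ N (gzShift (I * ℏ) n j γ)) /
        ∏ s ∈ (Icc 1 n).erase j, (γ n j - γ n s) = 0 := by
  rw [Eraise_sub_Elower]
  refine (and_iff_right_of_imp fun hsum => by rw [hsum, mul_zero]).mpr
    (sum_eq_zero fun j hj => ?_)
  obtain ⟨n, rfl⟩ := Nat.exists_eq_add_of_le' hn
  have hne : ∀ l ∈ Icc 1 (N - 1), ∀ k ∈ Icc 1 l, ∀ m ∈ Icc 1 (l + 1),
      γ l k - γ (l + 1) m ≠ I * ℏ / 2 := fun l hl k hk m hm =>
    ne_I_mul_div_two_of_div_add_half_ne_one hℏ (by simpa using hγ' l hl k hk m hm 1 le_rfl)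
  have hlower : ∀ k ∈ Icc 1 n, γ n k - γ (n + 1) j ≠ I * ℏ / 2 := fun k hk =>
    hne n (mem_Icc.mpr (by have := mem_Icc.mp hk; omega)) k hk j hj
  rw [Nat.add_sub_cancel, prod_mul_vSuth_gzShift_add_eq_zero hℏ (by omega) hj
    (hne (n + 1) (mem_Icc.mpr ⟨hn, hnN⟩) j hj) hlower, zero_div]

end

theorem sutherland_vector_vN (ℏ : ℝ) (hℏ : 0 < ℏ) (N : ℕ) (hN : 2 ≤ N)
    (γ : GZ) (hγ : NonResonant ℏ N γ)
    (hγ' : ∀ n ∈ Finset.Icc 1 (N - 1), ∀ k ∈ Finset.Icc 1 n, ∀ m ∈ Finset.Icc 1 (n + 1),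
      ∀ z : ℤ, (γ n k - γ (n + 1) m) / (Complex.I * ℏ) + 1 / 2 ≠ (z : ℂ)) :
    ∀ n : ℕ, 1 ≤ n → n ≤ N - 1 →
      Eraise ℏ n (vSuth ℏ N) γ - Elower ℏ n (vSuth ℏ N) γ = 0 ∧
      ∑ j ∈ Finset.Icc 1 n,
        ((∏ r ∈ Finset.Icc 1 (n + 1), (γ n j - γ (n + 1) r - Complex.I * ℏ / 2)) *
            vSuth ℏ N (gzShift (-(Complex.I * ℏ)) n j γ) +
          (∏ r ∈ Finset.Icc 1 (n - 1), (γ n j - γ (n - 1) r + Complex.I * ℏ / 2)) *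
            vSuth ℏ N (gzShift (Complex.I * ℏ) n j γ)) /
          ∏ s ∈ (Finset.Icc 1 n).erase j, (γ n j - γ n s) = 0 :=
  fun _ hn hnN => sutherland_vector_vN_general hℏ.ne' (fun _ => hγ.injOn)
    (fun l hl k hk m hm z _ => hγ' l hl k hk m hm z) hn hnN
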